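/- Let 𝒞 be any class of monoids closed under isomorphism, let A be a finite alphabet with |A| ≥ 2, and let k be a positive integer. For each n, let q(n) denote the proportion of ordered presentations over A with k relations and sum relation length n (i.e., sequences of k pairs of words over A whose total length is n) presenting a monoid in 𝒞, and let p(n) denote the proportion of unordered presentations over A with k relations and sum relation length n (i.e., multisets of k pairs of words over A of total length n) presenting a monoid in 𝒞. Then q(n) − p(n) → 0 as n → ∞. -/

import Mathlib

open FreeMonoid

/-- The congruence on the free monoid generated by a presentation `R`. -/
def presCon {A : Type*} (R : Set (FreeMonoid A × FreeMonoid A)) : Con (FreeMonoid A) :=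
  conGen fun u v => (u, v) ∈ R

/-- `w` is a relation word of the presentation `R`. -/
def IsRelWord {A : Type*} (R : Set (FreeMonoid A × FreeMonoid A)) (w : FreeMonoid A) : Prop :=
  ∃ p ∈ R, p.1 = w ∨ p.2 = w

/-- `u` is a factor of `w`. -/
def IsFactor {A : Type*} (u w : FreeMonoid A) : Prop := ∃ p q, w = p * u * q

/-- `u` is a piece of the presentation `R`: it is empty, or occurs as a factor of two
distinct relation words, or in two different (possibly overlapping) positions within
one relation word. -/
def IsPiece {A : Type*} (R : Set (FreeMonoid A × FreeMonoid A)) (u : FreeMonoid A) : Prop :=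
  u = 1 ∨
  (∃ w₁ w₂, IsRelWord R w₁ ∧ IsRelWord R w₂ ∧ w₁ ≠ w₂ ∧ IsFactor u w₁ ∧ IsFactor u w₂) ∨
  (∃ w, IsRelWord R w ∧ ∃ p q p' q', w = p * u * q ∧ w = p' * u * q' ∧ p ≠ p')

/-- The small overlap condition `C(m)`: no relation word is a product of strictly fewer
than `m` pieces. -/
def SmallOverlapC {A : Type*} (R : Set (FreeMonoid A × FreeMonoid A)) (m : ℕ) : Prop :=
  ∀ w, IsRelWord R w → ∀ l : List (FreeMonoid A),
    (∀ x ∈ l, IsPiece R x) → l.prod = w → m ≤ l.length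

/-- The number of ordered presentations over `A` with `k` relations and sum relation
length `n` (sequences of `k` pairs of words) whose presented monoid satisfies `P`. -/
noncomputable def orderedCount (A : Type) (k n : ℕ)
    (P : (Q : Type) → [inst : Monoid Q] → Prop) : ℕ :=
  Nat.card {f : Fin k → FreeMonoid A × FreeMonoid A //
    (∑ i, ((f i).1.length + (f i).2.length)) = n ∧
    P (presCon (Set.range f)).Quotient}

/-- The number of unordered presentations over `A` with `k` relations and sum relation
length `n` (multisets of `k` pairs of words) whose presented monoid satisfies `P`. -/
noncomputable def unorderedCount (A : Type) (k n : ℕ)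
    (P : (Q : Type) → [inst : Monoid Q] → Prop) : ℕ :=
  Nat.card {R : Multiset (FreeMonoid A × FreeMonoid A) //
    Multiset.card R = k ∧ (R.map fun p => p.1.length + p.2.length).sum = n ∧
    P (presCon {p | p ∈ R}).Quotient}

/-!
An unordered presentation with `k` distinct relations arises from exactly `k!` ordered ones, and any
other from at least one and fewer than `k!`. So the two proportions differ by at most `k!` times the
proportion of ordered presentations in which some relation is repeated.

That proportion tends to zero. Two equal relations have equal words on both sides, and some relation
word has length at least `n / (2 * k)`, so there are equal words in two positions different from
that of the long word. Once these three positions are fixed, moving a prefix of the long word to the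
end of one of the two equal words loses no information, because the other one still shows where the
moved prefix begins. The length of the prefix being arbitrary, every such presentation yields more
than `n / (2 * k)` presentations of the same sum relation length.
-/

section Tuples

variable {ι X : Type*} [Fintype ι]

/-- The multiset of values of a tuple: the tuple with the order of its entries forgotten. -/
def tupleMultiset (f : ι → X) : Multiset X :=
  Finset.univ.val.map f

theorem tupleMultiset_comp_perm (f : ι → X) (σ : Equiv.Perm ι) :
    tupleMultiset (f ∘ σ) = tupleMultiset f := by
  rw [tupleMultiset, ← Multiset.map_map, Multiset.map_univ_val_equiv, tupleMultiset]

theorem setOf_mem_tupleMultiset (f : ι → X) : {x | x ∈ tupleMultiset f} = Set.range f := by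
  ext x
  simp [tupleMultiset]

theorem sum_map_tupleMultiset {M : Type*} [AddCommMonoid M] (f : ι → X) (w : X → M) :
    ((tupleMultiset f).map w).sum = ∑ i, w (f i) := by
  rw [tupleMultiset, Multiset.map_map]
  rfl

theorem nodup_tupleMultiset {f : ι → X} : (tupleMultiset f).Nodup ↔ Function.Injective f := by
  rw [tupleMultiset, Finset.nodup_map_iff_injOn, Finset.coe_univ, Set.injOn_univ]

theorem range_tupleMultiset :
    Set.range (tupleMultiset : (ι → X) → Multiset X) =
      {R | Multiset.card R = Fintype.card ι} := by
  ext R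
  constructor
  · rintro ⟨f, rfl⟩
    simp [tupleMultiset]
  · induction R using Quotient.inductionOn with
    | _ l =>
      intro hl
      let e : ι ≃ Fin l.length := Fintype.equivFinOfCardEq hl.symm
      refine ⟨l.get ∘ e, ?_⟩
      rw [tupleMultiset, ← Multiset.map_map, Multiset.map_univ_val_equiv, Fin.univ_val_map,
        List.ofFn_get]
      rfl

theorem tupleMultiset_eq_iff_exists_perm {f g : ι → X} :
    tupleMultiset g = tupleMultiset f ↔ ∃ σ : Equiv.Perm ι, f ∘ σ = g := by
  classical
  refine ⟨fun h => ?_, fun ⟨σ, hσ⟩ => hσ ▸ tupleMultiset_comp_perm f σ⟩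
  have fiberEquiv (x : X) : Nonempty ({i // g i = x} ≃ {i // f i = x}) := by
    rw [← Fintype.card_eq, Fintype.card_subtype, Fintype.card_subtype]
    simpa only [tupleMultiset, Multiset.count_map, Finset.card, Finset.filter_val, eq_comm]
      using congrArg (Multiset.count x) h
  exact ⟨Equiv.ofFiberEquiv fun x => (fiberEquiv x).some,
    funext (Equiv.ofFiberEquiv_map fun x => (fiberEquiv x).some)⟩

theorem setOf_tupleMultiset_eq (f : ι → X) :
    {g : ι → X | tupleMultiset g = tupleMultiset f} = Set.range fun σ : Equiv.Perm ι => f ∘ σ :=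
  Set.ext fun _ => tupleMultiset_eq_iff_exists_perm

theorem finite_setOf_tupleMultiset_eq (f : ι → X) :
    {g : ι → X | tupleMultiset g = tupleMultiset f}.Finite := by
  rw [setOf_tupleMultiset_eq]
  exact Set.finite_range _

theorem ncard_setOf_tupleMultiset_eq_le (f : ι → X) :
    {g : ι → X | tupleMultiset g = tupleMultiset f}.ncard ≤ (Fintype.card ι).factorial := by
  classical
  rw [setOf_tupleMultiset_eq, ← Fintype.card_perm, ← Nat.card_eq_fintype_card,
    ← Set.ncard_univ, ← Set.image_univ]
  exact Set.ncard_image_le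

theorem ncard_setOf_tupleMultiset_eq_of_injective {f : ι → X} (hf : Function.Injective f) :
    {g : ι → X | tupleMultiset g = tupleMultiset f}.ncard = (Fintype.card ι).factorial := by
  classical
  have comp_injective : Function.Injective fun σ : Equiv.Perm ι => f ∘ σ :=
    fun σ τ h => DFunLike.coe_injective (hf.comp_left h)
  rw [setOf_tupleMultiset_eq, ← Fintype.card_perm, ← Nat.card_eq_fintype_card,
    ← Set.ncard_univ, ← Set.image_univ, Set.ncard_image_of_injective _ comp_injective]

theorem ncard_le_factorial_mul_ncard_image {S : Set (ι → X)} (hS : S.Finite) :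
    S.ncard ≤ (Fintype.card ι).factorial * (tupleMultiset '' S).ncard := by
  classical
  lift S to Finset (ι → X) using hS
  rw [← Finset.coe_image, Set.ncard_coe_finset, Set.ncard_coe_finset]
  refine Finset.card_le_mul_card_image S _ fun R hR => ?_
  obtain ⟨f, -, rfl⟩ := Finset.mem_image.1 hR
  rw [← Set.ncard_coe_finset]
  refine (Set.ncard_le_ncard (fun g hg => ?_) (finite_setOf_tupleMultiset_eq f)).trans
    (ncard_setOf_tupleMultiset_eq_le f)
  exact (Finset.mem_filter.1 hg).2

theorem factorial_mul_ncard_image_injective_le {𝓡 : Set (Multiset X)}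
    (h𝓡 : {f : ι → X | tupleMultiset f ∈ 𝓡}.Finite) :
    (Fintype.card ι).factorial *
        (tupleMultiset '' {f : ι → X | tupleMultiset f ∈ 𝓡 ∧ Function.Injective f}).ncard ≤
      {f : ι → X | tupleMultiset f ∈ 𝓡}.ncard := by
  classical
  refine le_trans ?_ (Set.ncard_le_ncard (fun f hf => hf.1 :
    {f : ι → X | tupleMultiset f ∈ 𝓡 ∧ Function.Injective f} ⊆ _) h𝓡)
  have injective_finite : {f : ι → X | tupleMultiset f ∈ 𝓡 ∧ Function.Injective f}.Finite :=
    h𝓡.subset fun f hf => hf.1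
  obtain ⟨S, hS⟩ := injective_finite.exists_finset_coe
  rw [← hS, ← Finset.coe_image, Set.ncard_coe_finset, Set.ncard_coe_finset]
  refine Finset.mul_card_image_le_card S _ fun R hR => ?_
  obtain ⟨f, hf, rfl⟩ := Finset.mem_image.1 hR
  obtain ⟨f_mem, f_injective⟩ := hS.subset hf
  rw [← ncard_setOf_tupleMultiset_eq_of_injective f_injective, ← Set.ncard_coe_finset]
  refine Set.ncard_le_ncard fun g hg => ?_
  obtain ⟨σ, rfl⟩ := tupleMultiset_eq_iff_exists_perm.1 hg
  have comp_mem : f ∘ σ ∈ S := hS.superset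
    ⟨by rwa [tupleMultiset_comp_perm], f_injective.comp σ.injective⟩
  exact Finset.mem_coe.2 (Finset.mem_filter.2 ⟨comp_mem, hg⟩)

theorem factorial_mul_ncard_image_le {𝓡 : Set (Multiset X)}
    (h𝓡 : {f : ι → X | tupleMultiset f ∈ 𝓡}.Finite) :
    (Fintype.card ι).factorial * (tupleMultiset '' {f : ι → X | tupleMultiset f ∈ 𝓡}).ncard ≤
      {f : ι → X | tupleMultiset f ∈ 𝓡}.ncard + (Fintype.card ι).factorial *
          {f : ι → X | tupleMultiset f ∈ 𝓡 ∧ ¬ Function.Injective f}.ncard := by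
  have split : {f : ι → X | tupleMultiset f ∈ 𝓡} =
      {f | tupleMultiset f ∈ 𝓡 ∧ Function.Injective f} ∪
        {f | tupleMultiset f ∈ 𝓡 ∧ ¬ Function.Injective f} := by
    ext f
    simp only [Set.mem_ofPred_eq, Set.mem_union, ← and_or_left, em, and_true]
  have image_noninjective_le :
      (tupleMultiset '' {f : ι → X | tupleMultiset f ∈ 𝓡 ∧ ¬ Function.Injective f}).ncard ≤
        {f : ι → X | tupleMultiset f ∈ 𝓡 ∧ ¬ Function.Injective f}.ncard :=
    Set.ncard_image_le (h𝓡.subset fun f hf => hf.1)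
  calc (Fintype.card ι).factorial * (tupleMultiset '' {f : ι → X | tupleMultiset f ∈ 𝓡}).ncard
    _ ≤ (Fintype.card ι).factorial *
          ((tupleMultiset '' {f : ι → X | tupleMultiset f ∈ 𝓡 ∧ Function.Injective f}).ncard +
            (tupleMultiset '' {f : ι → X | tupleMultiset f ∈ 𝓡 ∧ ¬ Function.Injective f}).ncard) :=
        Nat.mul_le_mul_left _ (by rw [split, Set.image_union]; exact Set.ncard_union_le _ _)
    _ ≤ _ := by
        rw [mul_add]
        exact Nat.add_le_add (factorial_mul_ncard_image_injective_le h𝓡)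
          (Nat.mul_le_mul_left _ image_noninjective_le)

end Tuples

section WordTuples

variable {I A : Type*}

/-- The tuple of words obtained from `F` by moving the prefix of length `t` of the word at `e` to
the end of the word at `x`; the whole word is moved if it is shorter than `t`. -/
def movePrefix [DecidableEq I] (e x : I) (F : I → List A) (t : ℕ) : I → List A :=
  Function.update (Function.update F x (F x ++ (F e).take t)) e ((F e).drop t)

/-- The word at `y` is untouched and remembers the original word at `x`, so the moved prefix can be
read off. -/
theorem injOn_movePrefix [DecidableEq I] {x y e : I} (hxy : x ≠ y) (hxe : x ≠ e)
    (hye : y ≠ e) :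
    Set.InjOn (fun p : (I → List A) × ℕ => movePrefix e x p.1 p.2)
      {p | p.1 x = p.1 y ∧ p.2 ≤ (p.1 e).length} := by
  rintro ⟨F, t⟩ ⟨hF, ht⟩ ⟨G, s⟩ ⟨hG, hs⟩ h
  dsimp only at hF ht hG hs h
  have apply_of_ne (i : I) (hix : i ≠ x) (hie : i ≠ e) : F i = G i := by
    simpa only [movePrefix, Function.update_of_ne hix, Function.update_of_ne hie]
      using congrFun h i
  have apply_x : F x = G x := by rw [hF, hG, apply_of_ne y hxy.symm hye]
  have take_eq : (F e).take t = (G e).take s := by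
    have := congrFun h x
    simp only [movePrefix, Function.update_self, Function.update_of_ne hxe, apply_x] at this
    exact List.append_cancel_left this
  have drop_eq : (F e).drop t = (G e).drop s := by
    simpa only [movePrefix, Function.update_self] using congrFun h e
  have apply_e : F e = G e := by
    rw [← List.take_append_drop t (F e), take_eq, drop_eq, List.take_append_drop]
  have t_eq : t = s := by
    simpa only [List.length_take_of_le ht, List.length_take_of_le hs]
      using congrArg List.length take_eq
  refine Prod.ext (funext fun i => ?_) t_eq
  by_cases hie : i = e
  · exact hie ▸ apply_e
  by_cases hix : i = x
  · exact hix ▸ apply_x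
  exact apply_of_ne i hix hie

variable [Fintype I]

theorem sum_length_movePrefix [DecidableEq I] {e x : I} (hxe : x ≠ e) (F : I → List A) (t : ℕ) :
    ∑ i, (movePrefix e x F t i).length = ∑ i, (F i).length := by
  have hx : x ∈ Finset.univ.erase e := Finset.mem_erase.2 ⟨hxe, Finset.mem_univ x⟩
  have off_support : ∀ i ∈ (Finset.univ.erase e).erase x,
      (movePrefix e x F t i).length = (F i).length := by
    intro i hi
    obtain ⟨hix, hie, -⟩ := by simpa only [Finset.mem_erase] using hi
    rw [movePrefix, Function.update_of_ne hie, Function.update_of_ne hix]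
  rw [← Finset.add_sum_erase _ _ (Finset.mem_univ e), ← Finset.add_sum_erase _ _ hx,
    ← Finset.add_sum_erase _ (fun i => (F i).length) (Finset.mem_univ e),
    ← Finset.add_sum_erase _ (fun i => (F i).length) hx, Finset.sum_congr rfl off_support]
  simp only [movePrefix, Function.update_self, Function.update_of_ne hxe, List.length_drop,
    List.length_append, List.length_take]
  omega

theorem finite_setOf_sum_length_eq [Finite A] (n : ℕ) :
    {F : I → List A | ∑ i, (F i).length = n}.Finite := by
  refine (Set.Finite.pi' fun _ : I => List.finite_length_le A n).subset ?_
  rintro F rfl i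
  exact Finset.single_le_sum (f := fun i => (F i).length) (fun _ _ => Nat.zero_le _)
    (Finset.mem_univ i)

theorem exists_sum_div_card_le [Nonempty I] (a : I → ℕ) :
    ∃ e, (∑ i, a i) / Fintype.card I ≤ a e := by
  have sum_average_le : ∑ _i : I, (∑ i, a i) / Fintype.card I ≤ ∑ i, a i := by
    rw [Finset.sum_const, Finset.card_univ, smul_eq_mul]
    exact Nat.mul_div_le _ _
  obtain ⟨e, -, he⟩ := Finset.exists_le_of_sum_le Finset.univ_nonempty sum_average_le
  exact ⟨e, he⟩

theorem ncard_setOf_apply_eq_mul_le [Finite A] {x y e : I} (hxy : x ≠ y) (hxe : x ≠ e)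
    (hye : y ≠ e) (n m : ℕ) :
    {F : I → List A | ∑ i, (F i).length = n ∧ F x = F y ∧ m ≤ (F e).length}.ncard * (m + 1) ≤
      {F : I → List A | ∑ i, (F i).length = n}.ncard := by
  classical
  rw [← Finset.card_range (m + 1), ← Set.ncard_coe_finset, ← Set.ncard_prod]
  refine Set.ncard_le_ncard_of_injOn (fun p => movePrefix e x p.1 p.2) ?_
    ((injOn_movePrefix hxy hxe hye).mono ?_) (finite_setOf_sum_length_eq n)
  · rintro ⟨F, t⟩ ⟨⟨hn, -, -⟩, -⟩
    exact (sum_length_movePrefix hxe F t).trans hn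
  · rintro ⟨F, t⟩ ⟨⟨-, hF, hm⟩, ht⟩
    exact ⟨hF, (Finset.mem_range_succ_iff.1 ht).trans hm⟩

end WordTuples

section Presentations

variable {A ι : Type*}

/-- The contribution of a relation to the sum relation length of a presentation. -/
def relationLength (r : FreeMonoid A × FreeMonoid A) : ℕ :=
  r.1.length + r.2.length

/-- The relation words of a family of relations, indexed by a relation together with a side
(`true` for the left one, `false` for the right one). -/
def relationWords : (ι → FreeMonoid A × FreeMonoid A) ≃ (ι × Bool → List A) where
  toFun f p := bif p.2 then (f p.1).1.toList else (f p.1).2.toList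
  invFun F i := (FreeMonoid.ofList (F (i, true)), FreeMonoid.ofList (F (i, false)))
  left_inv _ := rfl
  right_inv F := by
    ext1 ⟨i, b⟩
    cases b <;> rfl

variable [Fintype ι]

theorem sum_length_relationWords (f : ι → FreeMonoid A × FreeMonoid A) :
    ∑ p, (relationWords f p).length = ∑ i, relationLength (f i) := by
  rw [Fintype.sum_prod_type]
  exact Finset.sum_congr rfl fun i _ => Fintype.sum_bool _

theorem exists_relationWords_eq_of_not_injective {f : ι → FreeMonoid A × FreeMonoid A}
    (hf : ¬ Function.Injective f) :
    ∃ i j, i ≠ j ∧ ∃ e : ι × Bool, relationWords f (i, !e.2) = relationWords f (j, !e.2) ∧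
      (∑ i, relationLength (f i)) / (2 * Fintype.card ι) ≤ (relationWords f e).length := by
  obtain ⟨i, j, hij, i_ne_j⟩ := Function.not_injective_iff.1 hf
  have : Nonempty ι := ⟨i⟩
  obtain ⟨e, he⟩ := exists_sum_div_card_le fun p => (relationWords f p).length
  rw [sum_length_relationWords, Fintype.card_prod, Fintype.card_bool, mul_comm] at he
  have words_eq (b : Bool) : relationWords f (i, b) = relationWords f (j, b) := by
    cases b
    · exact congrArg (fun r => r.2.toList) hij
    · exact congrArg (fun r => r.1.toList) hij
  exact ⟨i, j, i_ne_j, e, words_eq _, he⟩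

/-- The ordered presentations, indexed by `ι` and of sum relation length `n`, whose multiset of
relations satisfies `P`. -/
def orderedPresentations (ι : Type*) [Fintype ι] (n : ℕ)
    (P : Multiset (FreeMonoid A × FreeMonoid A) → Prop) :
    Set (ι → FreeMonoid A × FreeMonoid A) :=
  {f | ∑ i, relationLength (f i) = n ∧ P (tupleMultiset f)}

/-- The unordered presentations with `k` relations and sum relation length `n` which satisfy
`P`. -/
def unorderedPresentations (k n : ℕ) (P : Multiset (FreeMonoid A × FreeMonoid A) → Prop) :
    Set (Multiset (FreeMonoid A × FreeMonoid A)) :=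
  {R | Multiset.card R = k ∧ (R.map relationLength).sum = n ∧ P R}

theorem orderedPresentations_eq_preimage (n : ℕ)
    (P : Multiset (FreeMonoid A × FreeMonoid A) → Prop) :
    orderedPresentations ι n P =
      tupleMultiset ⁻¹' {R | (R.map relationLength).sum = n ∧ P R} := by
  ext f
  rw [Set.mem_preimage, Set.mem_ofPred_eq, sum_map_tupleMultiset]
  rfl

theorem image_orderedPresentations (n : ℕ)
    (P : Multiset (FreeMonoid A × FreeMonoid A) → Prop) :
    tupleMultiset '' orderedPresentations ι n P =
      unorderedPresentations (Fintype.card ι) n P := by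
  rw [orderedPresentations_eq_preimage, Set.image_preimage_eq_inter_range, range_tupleMultiset,
    Set.inter_comm]
  rfl

theorem nonempty_orderedPresentations [Nonempty A] [Nonempty ι] (n : ℕ) :
    (orderedPresentations (A := A) ι n fun _ => True).Nonempty := by
  classical
  obtain ⟨i⟩ := ‹Nonempty ι›
  obtain ⟨w, hw⟩ := FreeMonoid.length_surjective (α := A) n
  refine ⟨Pi.mulSingle i (w, 1), ?_, trivial⟩
  rw [Finset.sum_eq_single i (fun j _ hj => ?_) (fun hi => absurd (Finset.mem_univ i) hi)]
  · rw [Pi.mulSingle_eq_same, relationLength, hw, FreeMonoid.length_one, add_zero]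
  · rw [Pi.mulSingle_eq_of_ne hj]
    rfl

variable [Finite A]

theorem finite_orderedPresentations (n : ℕ)
    (P : Multiset (FreeMonoid A × FreeMonoid A) → Prop) :
    (orderedPresentations ι n P).Finite :=
  ((finite_setOf_sum_length_eq n).preimage relationWords.injective.injOn).subset
    fun f hf => (sum_length_relationWords f).trans hf.1

theorem ncard_orderedPresentations_pos [Nonempty A] [Nonempty ι] (n : ℕ) :
    0 < (orderedPresentations (A := A) ι n fun _ => True).ncard :=
  (Set.ncard_pos (finite_orderedPresentations n _)).2 (nonempty_orderedPresentations n)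

theorem ncard_orderedPresentations_le (n : ℕ)
    (P : Multiset (FreeMonoid A × FreeMonoid A) → Prop) :
    (orderedPresentations ι n P).ncard ≤
      (Fintype.card ι).factorial * (unorderedPresentations (Fintype.card ι) n P).ncard := by
  rw [← image_orderedPresentations]
  exact ncard_le_factorial_mul_ncard_image (finite_orderedPresentations n P)

theorem factorial_mul_ncard_unorderedPresentations_le (n : ℕ)
    (P : Multiset (FreeMonoid A × FreeMonoid A) → Prop) :
    (Fintype.card ι).factorial * (unorderedPresentations (Fintype.card ι) n P).ncard ≤
      (orderedPresentations ι n P).ncard + (Fintype.card ι).factorial *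
        (orderedPresentations (A := A) ι n fun R => ¬ R.Nodup).ncard := by
  have finite_preimage := finite_orderedPresentations (ι := ι) n P
  rw [orderedPresentations_eq_preimage] at finite_preimage
  rw [← image_orderedPresentations, orderedPresentations_eq_preimage]
  refine (factorial_mul_ncard_image_le finite_preimage).trans
    (Nat.add_le_add_left (Nat.mul_le_mul_left _ (Set.ncard_le_ncard ?_ ?_)) _)
  · rintro f ⟨hf, f_not_injective⟩
    exact ⟨sum_map_tupleMultiset f relationLength ▸ hf.1, mt nodup_tupleMultiset.1 f_not_injective⟩
  · exact finite_orderedPresentations n _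

theorem ncard_setOf_relationWords_eq_mul_le {i j : ι} (hij : i ≠ j) (l : ι) (b : Bool)
    (n m : ℕ) :
    {f : ι → FreeMonoid A × FreeMonoid A | ∑ i, relationLength (f i) = n ∧
        relationWords f (i, !b) = relationWords f (j, !b) ∧
        m ≤ (relationWords f (l, b)).length}.ncard * (m + 1) ≤
      (orderedPresentations (A := A) ι n fun _ => True).ncard := by
  classical
  have h := ncard_setOf_apply_eq_mul_le (A := A) (x := (i, !b)) (y := (j, !b)) (e := (l, b))
    (by simpa using hij) (by simp) (by simp) n m
  rw [← Set.ncard_preimage_of_injective_subset_range relationWords.injective (by simp),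
    ← Set.ncard_preimage_of_injective_subset_range relationWords.injective (by simp)] at h
  simpa only [Set.preimage_ofPred_eq, sum_length_relationWords, orderedPresentations, and_true]
    using h

theorem ncard_not_nodup_orderedPresentations_mul_le (n : ℕ) :
    (orderedPresentations (A := A) ι n fun R => ¬ R.Nodup).ncard *
        (n / (2 * Fintype.card ι) + 1) ≤
      2 * Fintype.card ι ^ 3 * (orderedPresentations (A := A) ι n fun _ => True).ncard := by
  classical
  set m := n / (2 * Fintype.card ι)
  let coincidence (t : (ι × ι) × (ι × Bool)) : Set (ι → FreeMonoid A × FreeMonoid A) :=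
    {f | ∑ i, relationLength (f i) = n ∧
      relationWords f (t.1.1, !t.2.2) = relationWords f (t.1.2, !t.2.2) ∧
      m ≤ (relationWords f t.2).length}
  let indices : Finset ((ι × ι) × (ι × Bool)) := Finset.univ.offDiag ×ˢ Finset.univ
  have card_indices_le : indices.card ≤ 2 * Fintype.card ι ^ 3 := by
    rw [Finset.card_product, Finset.offDiag_card, Finset.card_univ, Finset.card_univ,
      Fintype.card_prod, Fintype.card_bool]
    calc _ ≤ Fintype.card ι * Fintype.card ι * (Fintype.card ι * 2) :=
          Nat.mul_le_mul_right _ (Nat.sub_le _ _)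
      _ = 2 * Fintype.card ι ^ 3 := by ring
  have subset_biUnion :
      (orderedPresentations (A := A) ι n fun R => ¬ R.Nodup) ⊆ ⋃ t ∈ indices, coincidence t := by
    rintro f ⟨rfl, repeated⟩
    obtain ⟨i, j, hij, e, words_eq, he⟩ :=
      exists_relationWords_eq_of_not_injective (mt nodup_tupleMultiset.2 repeated)
    refine Set.mem_biUnion (x := ((i, j), e)) ?_ ⟨rfl, words_eq, he⟩
    simpa [indices] using hij
  have biUnion_finite : (⋃ t ∈ indices, coincidence t).Finite :=
    (finite_orderedPresentations n fun _ => True).subset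
      (Set.iUnion₂_subset fun _ _ _ hf => ⟨hf.1, trivial⟩)
  calc (orderedPresentations (A := A) ι n fun R => ¬ R.Nodup).ncard * (m + 1)
    _ ≤ (∑ t ∈ indices, (coincidence t).ncard) * (m + 1) :=
        Nat.mul_le_mul_right _ ((Set.ncard_le_ncard subset_biUnion biUnion_finite).trans
          (indices.set_ncard_biUnion_le coincidence))
    _ = ∑ t ∈ indices, (coincidence t).ncard * (m + 1) := Finset.sum_mul _ _ _
    _ ≤ indices.card * (orderedPresentations (A := A) ι n fun _ => True).ncard :=
        Finset.sum_le_card_nsmul _ _ _ fun t ht => ncard_setOf_relationWords_eq_mul_le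
          (Finset.mem_offDiag.1 (Finset.mem_product.1 ht).1).2.2 _ _ n m
    _ ≤ 2 * Fintype.card ι ^ 3 * (orderedPresentations (A := A) ι n fun _ => True).ncard :=
        Nat.mul_le_mul_right _ card_indices_le

end Presentations

section Proportions

theorem abs_div_sub_div_le {o O v V d : ℝ} (ho : 0 ≤ o) (hoO : o ≤ O) (hO : 0 < O)
    (hov : o ≤ v) (hvo : v ≤ o + d) (hOV : O ≤ V) (hVO : V ≤ O + d) :
    |o / O - v / V| ≤ d / O := by
  have hV : 0 < V := hO.trans_le hOV
  have hd : 0 ≤ d := by linarith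
  have upper : v / V ≤ (o + d) / O := div_le_div₀ (by positivity) hvo hO hOV
  have lower : (o - d) / O ≤ v / V := by
    rw [div_le_div_iff₀ hO hV]
    nlinarith
  rw [add_div] at upper
  rw [sub_div] at lower
  exact abs_le.2 ⟨by linarith, by linarith⟩

variable {A ι : Type*} [Finite A] [Nonempty A] [Fintype ι] [Nonempty ι]

theorem proportion_not_nodup_orderedPresentations_le (n : ℕ) :
    ((orderedPresentations (A := A) ι n fun R => ¬ R.Nodup).ncard : ℝ) /
        (orderedPresentations (A := A) ι n fun _ => True).ncard ≤
      2 * Fintype.card ι ^ 3 / ((n / (2 * Fintype.card ι) : ℕ) + 1) := by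
  rw [div_le_div_iff₀ (mod_cast ncard_orderedPresentations_pos n) (by positivity)]
  exact_mod_cast ncard_not_nodup_orderedPresentations_mul_le n

theorem abs_proportion_sub_proportion_le (n : ℕ)
    (P : Multiset (FreeMonoid A × FreeMonoid A) → Prop) :
    |((orderedPresentations ι n P).ncard : ℝ) /
          (orderedPresentations (A := A) ι n fun _ => True).ncard -
        ((unorderedPresentations (Fintype.card ι) n P).ncard : ℝ) /
          (unorderedPresentations (A := A) (Fintype.card ι) n fun _ => True).ncard| ≤
      (Fintype.card ι).factorial *
        (((orderedPresentations (A := A) ι n fun R => ¬ R.Nodup).ncard : ℝ) /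
          (orderedPresentations (A := A) ι n fun _ => True).ncard) := by
  have ncard_le_total : (orderedPresentations ι n P).ncard ≤
      (orderedPresentations (A := A) ι n fun _ => True).ncard :=
    Set.ncard_le_ncard (fun f hf => ⟨hf.1, trivial⟩) (finite_orderedPresentations n _)
  have factorial_ne_zero : ((Fintype.card ι).factorial : ℝ) ≠ 0 :=
    Nat.cast_ne_zero.2 (Nat.factorial_ne_zero _)
  rw [← mul_div_mul_left ((unorderedPresentations (Fintype.card ι) n P).ncard : ℝ) _
    factorial_ne_zero, ← mul_div_assoc]
  exact abs_div_sub_div_le (Nat.cast_nonneg _) (mod_cast ncard_le_total)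
    (mod_cast ncard_orderedPresentations_pos n)
    (mod_cast ncard_orderedPresentations_le n P)
    (mod_cast factorial_mul_ncard_unorderedPresentations_le n P)
    (mod_cast ncard_orderedPresentations_le n _)
    (mod_cast factorial_mul_ncard_unorderedPresentations_le n _)

end Proportions

section Counts

variable (A : Type) (k n : ℕ) (C : (Q : Type) → [Monoid Q] → Prop)

theorem orderedCount_eq_ncard :
    orderedCount A k n C =
      (orderedPresentations (A := A) (Fin k) n fun R =>
        C (presCon {r | r ∈ R}).Quotient).ncard := by
  rw [orderedCount, ← Set.coe_ofPred, Nat.card_coe_set_eq]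
  congr 1
  ext f
  rw [orderedPresentations, Set.mem_ofPred_eq, Set.mem_ofPred_eq, setOf_mem_tupleMultiset]
  rfl

theorem unorderedCount_eq_ncard :
    unorderedCount A k n C =
      (unorderedPresentations (A := A) k n fun R => C (presCon {r | r ∈ R}).Quotient).ncard :=
  Nat.card_coe_set_eq _

end Counts

theorem statement18_general {A : Type*} [Finite A] [Nonempty A] {k : ℕ} (hk : 1 ≤ k)
    (P : Multiset (FreeMonoid A × FreeMonoid A) → Prop) :
    Filter.Tendsto (fun n : ℕ =>
        ((orderedPresentations (Fin k) n P).ncard : ℝ) /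
            (orderedPresentations (A := A) (Fin k) n fun _ => True).ncard -
          ((unorderedPresentations k n P).ncard : ℝ) /
            (unorderedPresentations (A := A) k n fun _ => True).ncard)
      Filter.atTop (nhds 0) := by
  have : Nonempty (Fin k) := ⟨⟨0, hk⟩⟩
  have bound_tendsto : Filter.Tendsto
      (fun n : ℕ => (k.factorial : ℝ) * (2 * k ^ 3 / ((n / (2 * k) : ℕ) + 1)))
      Filter.atTop (nhds 0) := by
    rw [← mul_zero (k.factorial : ℝ)]
    exact (tendsto_const_nhds.div_atTop (Filter.tendsto_atTop_add_const_right _ _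
      (tendsto_natCast_atTop_atTop.comp (Nat.tendsto_div_const_atTop (by omega))))).const_mul _
  refine squeeze_zero_norm (fun n => ?_) bound_tendsto
  have h := (abs_proportion_sub_proportion_le (ι := Fin k) n P).trans
    (mul_le_mul_of_nonneg_left (proportion_not_nodup_orderedPresentations_le n)
      (Nat.cast_nonneg _))
  rwa [Fintype.card_fin] at h

/-- **Theorem.** Let `𝒞` be any isomorphism-closed class of monoids, `A` a finite
alphabet with `|A| ≥ 2` and `k` a positive integer. Then the proportion of ordered
`A`-generated `k`-relation presentations of sum relation length `n` presenting a monoid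
in `𝒞` converges with the corresponding proportion of unordered presentations, as
`n → ∞`. -/
theorem statement18 (C : (Q : Type) → [inst : Monoid Q] → Prop)
    (hC : ∀ (Q Q' : Type) [Monoid Q] [Monoid Q'], (Q ≃* Q') → (C Q ↔ C Q'))
    (A : Type) [Fintype A] (hA : 2 ≤ Fintype.card A) (k : ℕ) (hk : 1 ≤ k) :
    Filter.Tendsto (fun n : ℕ =>
        (orderedCount A k n C : ℝ) / (orderedCount A k n (fun _ => True) : ℝ) -
        (unorderedCount A k n C : ℝ) / (unorderedCount A k n (fun _ => True) : ℝ))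
      Filter.atTop (nhds 0) := by
  have : Nonempty A := Fintype.card_pos_iff.1 (by omega)
  simpa only [orderedCount_eq_ncard, unorderedCount_eq_ncard] using
    statement18_general hk fun R : Multiset (FreeMonoid A × FreeMonoid A) =>
      C (presCon {r | r ∈ R}).Quotient
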